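/- Let (R, m, k) be a commutative Noetherian local ring with char k != 2, and let M be a finitely generated R-module such that (1) M has rank 1, (2) M ⊗_R M has no embedded primes, and (3) Tor_1^R(M, M) = 0. Then M ≅ R. -/

import Mathlib

/-!
Over the total ring of fractions `Q` the module `M` becomes `Q` itself, so elements of
`(Q ⊗ M) ⊗_Q (Q ⊗ M)` commute under the swap. Hence every `x ⊗ y - y ⊗ x` in `M ⊗ M` is killed by a
nonzerodivisor of `R`. Since `M` has rank one, `M ⊗ M` is faithful, so its support is all of
`Spec R`; having no embedded primes then forces every associated prime of `M ⊗ M` to be a minimal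
prime of `R`, so nonzerodivisors of `R` act injectively on `M ⊗ M`. Therefore `x ⊗ y = y ⊗ x` in
`M ⊗ M`, and this persists over the residue field `k`, where it bounds `dim_k (k ⊗ M)` by one. By
Nakayama's lemma `M` is cyclic, and a cyclic faithful module is free of rank one.
-/

open CategoryTheory Limits TensorProduct

universe u

/-- `M` has rank one: `M ⊗_R Q` is free of rank 1 over the total ring of fractions `Q` of `R`. -/
def HasRankOne (R : Type u) [CommRing R] (M : Type u) [AddCommGroup M] [Module R M] : Prop :=
  Nonempty ((FractionRing R ⊗[R] M) ≃ₗ[FractionRing R] FractionRing R)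

/-- `N` has no embedded primes: every associated prime of `N` is a minimal element of the
support of `N`. -/
def HasNoEmbeddedPrimes (R : Type u) [CommRing R] (N : Type u) [AddCommGroup N]
    [Module R N] : Prop :=
  ∀ p ∈ associatedPrimes R N, ∀ q ∈ Module.support R N, q.asIdeal ≤ p → q.asIdeal = p

theorem tmul_comm_of_equiv_self {A P : Type*} [CommRing A] [AddCommGroup P] [Module A P]
    (e : P ≃ₗ[A] A) (a b : P) : a ⊗ₜ[A] b = b ⊗ₜ[A] a := by
  have h (c : P) : c = e c • e.symm 1 := by
    apply e.injective
    simp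
  rw [h a, h b]
  simp only [TensorProduct.smul_tmul', TensorProduct.tmul_smul, smul_smul, mul_comm]

theorem HasRankOne.tensor_self {R : Type u} [CommRing R] {M : Type u} [AddCommGroup M]
    [Module R M] (h : HasRankOne R M) : HasRankOne R (M ⊗[R] M) := by
  obtain ⟨e⟩ := h
  exact ⟨(AlgebraTensorModule.distribBaseChange R (FractionRing R) M M).trans
    ((TensorProduct.congr e e).trans (TensorProduct.lid _ _))⟩

/-- A module of rank one is faithful: anything killing `N` kills `Q ⊗ N ≃ Q`, which contains
`R`. -/
theorem HasRankOne.eq_zero_of_smul {R : Type u} [CommRing R] {N : Type u} [AddCommGroup N]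
    [Module R N] (h : HasRankOne R N) {r : R} (hr : ∀ n : N, r • n = 0) : r = 0 := by
  obtain ⟨e⟩ := h
  have h0 (z : FractionRing R ⊗[R] N) : algebraMap R (FractionRing R) r • z = 0 := by
    induction z with
    | zero => simp
    | add a b ha hb => rw [smul_add, ha, hb, add_zero]
    | tmul q n => rw [algebraMap_smul, TensorProduct.smul_tmul', TensorProduct.smul_tmul, hr,
        TensorProduct.tmul_zero]
  have h1 := congrArg e (h0 (e.symm 1))
  rw [map_smul, e.apply_symm_apply, map_zero, smul_eq_mul, mul_one] at h1
  exact (IsFractionRing.injective R (FractionRing R)) (by rw [h1, map_zero])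

/-- Without embedded primes, a finite module of rank one is torsion-free: its associated primes
are minimal primes of `R`, which contain no nonzerodivisors. -/
theorem HasRankOne.torsion_free {R : Type u} [CommRing R] [IsNoetherianRing R] {N : Type u}
    [AddCommGroup N] [Module R N] [Module.Finite R N] (h : HasRankOne R N)
    (hemb : HasNoEmbeddedPrimes R N) {s : R} (hs : s ∈ nonZeroDivisors R) {n : N}
    (hn : s • n = 0) : n = 0 := by
  by_contra hne
  obtain ⟨p, hp, hle⟩ := exists_le_isAssociatedPrime_of_isNoetherianRing R n hne
  have hsp : s ∈ p := hle (by simpa [Submodule.mem_colon_singleton] using hn)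
  have := hp.isPrime
  obtain ⟨q, hq, hqp⟩ := Ideal.exists_minimalPrimes_le (bot_le : (⊥ : Ideal R) ≤ p)
  have hqprime : q.IsPrime := hq.1.1
  have hsupp : (⟨q, hqprime⟩ : PrimeSpectrum R) ∈ Module.support R N := by
    rw [Module.support_eq_zeroLocus, PrimeSpectrum.mem_zeroLocus]
    intro r hr
    have hr0 : r = 0 := h.eq_zero_of_smul (Module.mem_annihilator.mp hr)
    rw [hr0]
    exact q.zero_mem
  have hqeq : q = p := hemb p hp _ hsupp hqp
  rw [← hqeq] at hsp
  exact Set.disjoint_left.mp (Ideal.disjoint_nonZeroDivisors_of_mem_minimalPrimes hq) hsp hs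

theorem HasRankOne.tmul_comm {R : Type u} [CommRing R] [IsNoetherianRing R] {M : Type u}
    [AddCommGroup M] [Module R M] [Module.Finite R M] (h : HasRankOne R M)
    (hemb : HasNoEmbeddedPrimes R (M ⊗[R] M)) (x y : M) : x ⊗ₜ[R] y = y ⊗ₜ[R] x := by
  obtain ⟨e⟩ := id h
  have h1 : (1 : FractionRing R) ⊗ₜ[R] (x ⊗ₜ[R] y) = 1 ⊗ₜ[R] (y ⊗ₜ[R] x) := by
    apply (AlgebraTensorModule.distribBaseChange R (FractionRing R) M M).injective
    simpa using tmul_comm_of_equiv_self e (1 ⊗ₜ x) (1 ⊗ₜ y)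
  obtain ⟨s, hs⟩ := (IsLocalizedModule.eq_iff_exists (nonZeroDivisors R)
    (TensorProduct.mk R (FractionRing R) (M ⊗[R] M) 1)).mp h1
  rw [← sub_eq_zero]
  apply h.tensor_self.torsion_free hemb s.2
  rw [smul_sub, sub_eq_zero]
  exact hs

theorem exists_span_singleton_of_tmul_comm {R : Type u} [CommRing R] [IsLocalRing R] {M : Type u}
    [AddCommGroup M] [Module R M] [Module.Finite R M]
    (hcomm : ∀ x y : M, x ⊗ₜ[R] y = y ⊗ₜ[R] x) : ∃ g : M, Submodule.span R {g} = ⊤ := by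
  let k := IsLocalRing.ResidueField R
  let b := Module.Free.chooseBasis k (k ⊗[R] M)
  have hsurj := TensorProduct.mk_surjective R M k IsLocalRing.residue_surjective
  choose f hf using fun i => hsurj (b i)
  -- Distinct basis vectors `b i`, `b j` would give distinct vectors `b i ⊗ b j` and `b j ⊗ b i`.
  have hsub : ∀ i j : Module.Free.ChooseBasisIndex k (k ⊗[R] M), i = j := by
    intro i j
    have h1 := congrArg (fun t => AlgebraTensorModule.distribBaseChange R k M M (1 ⊗ₜ[R] t))
      (hcomm (f i) (f j))
    have h2 : b i ⊗ₜ[k] b j = b j ⊗ₜ[k] b i := by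
      rw [← hf i, ← hf j]
      simpa using h1
    rw [← Module.Basis.tensorProduct_apply, ← Module.Basis.tensorProduct_apply] at h2
    exact congrArg Prod.fst ((b.tensorProduct b).injective h2)
  have htop := IsLocalRing.span_eq_top_of_tmul_eq_basis f b hf
  rcases isEmpty_or_nonempty (Module.Free.ChooseBasisIndex k (k ⊗[R] M)) with hE | ⟨⟨i⟩⟩
  · refine ⟨0, ?_⟩
    rw [Set.range_eq_empty, Submodule.span_empty] at htop
    rw [Submodule.span_zero_singleton, htop]
  · refine ⟨f i, ?_⟩
    rw [eq_top_iff, ← htop]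
    apply Submodule.span_mono
    rintro _ ⟨j, rfl⟩
    rw [hsub j i]
    exact Set.mem_singleton _

theorem stmt_14 (R : Type u) [CommRing R] [IsNoetherianRing R] [IsLocalRing R]
    (hchar : ringChar (IsLocalRing.ResidueField R) ≠ 2)
    (M : Type u) [AddCommGroup M] [Module R M] [Module.Finite R M]
    (hrank : HasRankOne R M)
    (hemb : HasNoEmbeddedPrimes R (M ⊗[R] M))
    (htor : IsZero (((Tor (ModuleCat.{u} R) 1).obj (ModuleCat.of R M)).obj (ModuleCat.of R M))) :
    Nonempty (M ≃ₗ[R] R) := by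
  obtain ⟨g, hg⟩ := exists_span_singleton_of_tmul_comm (hrank.tmul_comm hemb)
  have hgen (m : M) : ∃ c : R, c • g = m :=
    Submodule.mem_span_singleton.mp (hg ▸ Submodule.mem_top)
  refine ⟨(LinearEquiv.ofBijective (LinearMap.toSpanSingleton R M g) ⟨?_, hgen⟩).symm⟩
  rw [injective_iff_map_eq_zero]
  intro r hr
  apply hrank.eq_zero_of_smul
  intro m
  obtain ⟨c, rfl⟩ := hgen m
  rw [smul_comm, show r • g = 0 from hr, smul_zero]
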